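/- Let T be a countable linearly ordered set and let (φ_τ)_{τ∈T} be a family with φ_τ ∈ D³([0,1]) and Σ_{τ∈T} ‖φ_τ‖₁ < ∞. For any bijection θ : ℕ → T, let ψ_n denote the composition of the maps φ_{θ(0)}, …, φ_{θ(n−1)} taken in the order induced by T. Then (ψ_n) is a Cauchy sequence with respect to the metric d(φ,ψ) = sup_{x∈[0,1]} |Nφ(x) − Nψ(x)|, it converges to an element of D²([0,1]), and the limit does not depend on the choice of the bijection θ. -/

import Mathlib

open Set Filter Topology

noncomputable section

/-- Derivative within `[0,1]`. -/
def derivI (φ : ℝ → ℝ) : ℝ → ℝ := derivWithin φ (Icc 0 1)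

/-- The nonlinearity `Nφ = (log φ')' = φ''/φ'` (with derivatives taken within `[0,1]`). -/
def nonlin (φ : ℝ → ℝ) : ℝ → ℝ := fun x => derivI (derivI φ) x / derivI φ x

/-- The `C⁰`-nonlinearity norm `‖φ‖ = sup_{x ∈ [0,1]} |Nφ(x)|`. -/
def nlNorm (φ : ℝ → ℝ) : ℝ := ⨆ x : Icc (0 : ℝ) 1, |nonlin φ x.1|

/-- The `C¹`-nonlinearity norm `‖φ‖₁ = max (sup |Nφ|, sup |(Nφ)'|)`. -/
def nlNorm1 (φ : ℝ → ℝ) : ℝ :=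
  max (nlNorm φ) (⨆ x : Icc (0 : ℝ) 1, |derivI (nonlin φ) x.1|)

/-- `φ ∈ D^k([0,1])`: an orientation-preserving `C^k` diffeomorphism of `[0,1]`
onto itself. -/
def IsDk (k : ℕ) (φ : ℝ → ℝ) : Prop :=
  ContDiffOn ℝ k φ (Icc 0 1) ∧ φ 0 = 0 ∧ φ 1 = 1 ∧ StrictMonoOn φ (Icc 0 1) ∧
    MapsTo φ (Icc 0 1) (Icc 0 1) ∧ ∀ x ∈ Icc (0 : ℝ) 1, 0 < derivI φ x

/-- `compFrom φs j m = φ_{j+m-1} ∘ ⋯ ∘ φ_{j+1} ∘ φ_j` (and the identity for `m = 0`). -/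
def compFrom (φs : ℕ → ℝ → ℝ) (j : ℕ) : ℕ → ℝ → ℝ
  | 0 => id
  | (m + 1) => φs (j + m) ∘ compFrom φs j m

/-- The composition of the finitely many diffeomorphisms `φ_τ`, `τ ∈ s`, in the
order of the linearly ordered index set (smallest time applied first). -/
def ordComp {T : Type*} [LinearOrder T] (φ : T → ℝ → ℝ) (s : Finset T) : ℝ → ℝ :=
  (s.sort (· ≤ ·)).foldl (fun g τ => φ τ ∘ g) id

/-
The chain rule for nonlinearities is `N(g ∘ f) = (Ng ∘ f) · f' + Nf`. By induction, it bounds the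
derivative of a finite composition, and the size and Lipschitz constant of its nonlinearity, in
terms of the sum of the norms of the factors only. Inserting one more map `f` into a composition
`h ∘ g` changes the nonlinearity at `x` by `g' x` times `N(h ∘ f) - Nh` at `g x`; as `f` is
`O(‖f‖₁)`-close to the identity and `Nh` is Lipschitz, this is at most a constant times `‖f‖₁`.
Hence the nonlinearities of the ordered compositions converge uniformly along the directed set of
finite subsets of `T`, which accounts for all enumerations at once. The limit is a continuous
function, and it is the nonlinearity of `x ↦ c ∫₀ˣ exp (∫₀ᵗ η s ds) dt` if `η` denotes it.
-/

section UniformConvergence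

variable {ι α T : Type*}

lemma exists_tendstoUniformlyOn {E : Type*} [UniformSpace E] [CompleteSpace E] [Nonempty E]
    {F : ι → α → E} {l : Filter ι} [l.NeBot] {s : Set α} (hF : UniformCauchySeqOn F l s) :
    ∃ f, TendstoUniformlyOn F f l s :=
  ⟨fun x => limUnder l fun n => F n x,
    hF.tendstoUniformlyOn_of_tendsto fun _ hx => (hF.cauchy_map hx).le_nhds_lim⟩

lemma dist_union_le_sum [DecidableEq T] {E : Type*} [PseudoMetricSpace E] {F : Finset T → E}
    {c : T → ℝ} (hF : ∀ s, ∀ a ∉ s, dist (F (insert a s)) (F s) ≤ c a) {s u : Finset T}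
    (hus : Disjoint u s) : dist (F (u ∪ s)) (F s) ≤ ∑ τ ∈ u, c τ := by
  induction u using Finset.induction_on with
  | empty => simp
  | insert a u ha ih =>
    rw [Finset.disjoint_insert_left] at hus
    rw [Finset.insert_union, Finset.sum_insert ha]
    exact (dist_triangle _ (F (u ∪ s)) _).trans
      (add_le_add (hF _ a (by simp [ha, hus.1])) (ih hus.2))

lemma uniformCauchySeqOn_of_dist_insert_le [DecidableEq T] {E : Type*} [PseudoMetricSpace E]
    {F : Finset T → α → E} {c : T → ℝ} {t : Set α} (hc : Summable c)
    (hF : ∀ x ∈ t, ∀ s, ∀ a ∉ s, dist (F (insert a s) x) (F s x) ≤ c a) :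
    UniformCauchySeqOn F atTop t := by
  refine Metric.uniformCauchySeqOn_iff.2 fun ε hε => ?_
  obtain ⟨s₀, hs₀⟩ := summable_iff_vanishing_norm.1 hc (ε / 2) (half_pos hε)
  have hclose : ∀ s ⊇ s₀, ∀ x ∈ t, dist (F s x) (F s₀ x) < ε / 2 := fun s hs x hx => by
    have hle := dist_union_le_sum (F := fun s => F s x) (hF x hx)
      (Finset.sdiff_disjoint (s := s₀) (t := s))
    rw [Finset.sdiff_union_of_subset hs] at hle
    exact hle.trans_lt ((le_abs_self _).trans_lt (hs₀ _ Finset.sdiff_disjoint))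
  refine ⟨s₀, fun s hs s' hs' x hx => ?_⟩
  exact (dist_triangle_right _ _ (F s₀ x)).trans_lt <|
    (add_lt_add (hclose s hs x hx) (hclose s' hs' x hx)).trans_eq (add_halves ε)

lemma abs_le_iSup_abs_of_isCompact [TopologicalSpace α] {f : α → ℝ} {s : Set α} {x : α}
    (hs : IsCompact s) (hf : ContinuousOn f s) (hx : x ∈ s) : |f x| ≤ ⨆ x : s, |f x| := by
  have hbdd : BddAbove (range fun x : s => |f x|) := by
    simpa only [image_eq_range] using hs.bddAbove_image hf.abs
  exact le_ciSup hbdd ⟨x, hx⟩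

lemma exists_forall_iSup_abs_sub_le [Nonempty ι] [SemilatticeSup ι] {F : ι → α → ℝ} {s : Set α}
    (hF : UniformCauchySeqOn F atTop s) {ε : ℝ} (hε : 0 < ε) :
    ∃ N, ∀ m ≥ N, ∀ n ≥ N, (⨆ x : s, |F m x - F n x|) ≤ ε := by
  obtain ⟨N, hN⟩ := Metric.uniformCauchySeqOn_iff.1 hF ε hε
  exact ⟨N, fun m hm n hn => Real.iSup_le (fun x => (hN m hm n hn x x.2).le) hε.le⟩

lemma tendsto_iSup_abs_sub {F : ι → α → ℝ} {f : α → ℝ} {l : Filter ι} {s : Set α}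
    (hF : TendstoUniformlyOn F f l s) :
    Tendsto (fun n => ⨆ x : s, |F n x - f x|) l (𝓝 0) := by
  refine Metric.tendsto_nhds.2 fun ε hε => ?_
  filter_upwards [Metric.tendstoUniformlyOn_iff.1 hF (ε / 2) (half_pos hε)] with n hn
  rw [Real.dist_0_eq_abs, abs_of_nonneg (Real.iSup_nonneg fun _ => abs_nonneg _)]
  refine (Real.iSup_le (fun x => ?_) (half_pos hε).le).trans_lt (half_lt_self hε)
  exact (dist_comm (f x) (F n x) ▸ hn x x.2).le

lemma tendstoUniformlyOn_image_range [DecidableEq T] {E : Type*} [UniformSpace E]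
    {F : Finset T → α → E} {f : α → E} {s : Set α} (hF : TendstoUniformlyOn F f atTop s)
    {θ : ℕ → T} (hθ : Function.Surjective θ) :
    TendstoUniformlyOn (fun n => F (Finset.image θ (Finset.range n))) f atTop s := by
  have himage : Tendsto (fun n => Finset.image θ (Finset.range n)) atTop atTop :=
    (tendsto_finset_image_atTop_atTop (Function.rightInverse_surjInv hθ)).comp
      tendsto_finset_range
  exact fun u hu => himage.eventually (hF u hu)

end UniformConvergence

section UnitInterval

open scoped unitInterval

section Calculus

variable {f f' : ℝ → ℝ} {f'' x y : ℝ}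

lemma derivI_eq (h : HasDerivWithinAt f y I x) (hx : x ∈ I) : derivI f x = y :=
  h.derivWithin (uniqueDiffOn_Icc_zero_one x hx)

lemma nonlin_eq_div (hf : ∀ y ∈ I, HasDerivWithinAt f (f' y) I y)
    (hf' : HasDerivWithinAt f' f'' I x) (hx : x ∈ I) : nonlin f x = f'' / f' x := by
  have hderiv : ∀ y ∈ I, derivI f y = f' y := fun y hy => derivI_eq (hf y hy) hy
  rw [nonlin, derivI_eq (hf'.congr hderiv (hderiv x hx)) hx, hderiv x hx]

lemma abs_sub_le_of_hasDerivWithinAt {C : ℝ}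
    (hf : ∀ x ∈ I, HasDerivWithinAt f (f' x) I x) (hC : ∀ x ∈ I, |f' x| ≤ C)
    (hx : x ∈ I) (hy : y ∈ I) : |f x - f y| ≤ C :=
  ((convex_Icc 0 1).norm_image_sub_le_of_norm_hasDerivWithin_le hf hC hy hx).trans <|
    mul_le_of_le_one_right ((abs_nonneg _).trans (hC x hx))
      (Real.dist_le_of_mem_Icc_01 hx hy)

end Calculus

namespace IsDk

variable {k l : ℕ} {f g : ℝ → ℝ} {x y a : ℝ}

lemma of_le (hf : IsDk k f) (h : l ≤ k) : IsDk l f :=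
  ⟨hf.1.of_le (mod_cast h), hf.2⟩

lemma contDiffOn (hf : IsDk k f) : ContDiffOn ℝ k f I := hf.1

lemma map_zero (hf : IsDk k f) : f 0 = 0 := hf.2.1

lemma map_one (hf : IsDk k f) : f 1 = 1 := hf.2.2.1

lemma strictMonoOn (hf : IsDk k f) : StrictMonoOn f I := hf.2.2.2.1

lemma mapsTo (hf : IsDk k f) : MapsTo f I I := hf.2.2.2.2.1

lemma derivI_pos (hf : IsDk k f) (hx : x ∈ I) : 0 < derivI f x := hf.2.2.2.2.2 x hx

lemma hasDerivWithinAt (hf : IsDk k f) (hk : k ≠ 0) (hx : x ∈ I) :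
    HasDerivWithinAt f (derivI f x) I x :=
  (hf.contDiffOn.differentiableOn (mod_cast hk) x hx).hasDerivWithinAt

lemma contDiffOn_derivI (hf : IsDk (k + 1) f) : ContDiffOn ℝ k (derivI f) I :=
  hf.contDiffOn.derivWithin uniqueDiffOn_Icc_zero_one (by norm_cast)

lemma contDiffOn_nonlin (hf : IsDk (k + 2) f) : ContDiffOn ℝ k (nonlin f) I :=
  ((contDiffOn_derivI (k := k + 1) hf).derivWithin uniqueDiffOn_Icc_zero_one (by norm_cast)).div
    (hf.of_le (Nat.le_succ _)).contDiffOn_derivI fun _ hx => (hf.derivI_pos hx).ne'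

lemma hasDerivWithinAt_derivI (hf : IsDk 2 f) (hx : x ∈ I) :
    HasDerivWithinAt (derivI f) (nonlin f x * derivI f x) I x := by
  rw [nonlin, div_mul_cancel₀ _ (hf.derivI_pos hx).ne']
  exact (hf.contDiffOn_derivI.differentiableOn (by norm_num) x hx).hasDerivWithinAt

lemma exists_derivI_eq_one (hf : IsDk k f) (hk : k ≠ 0) : ∃ c ∈ I, derivI f c = 1 := by
  obtain ⟨c, hc, hslope⟩ := exists_hasDerivAt_eq_slope f (derivI f) zero_lt_one
    hf.contDiffOn.continuousOn fun x hx =>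
      (hf.hasDerivWithinAt hk (Ioo_subset_Icc_self hx)).hasDerivAt (Icc_mem_nhds hx.1 hx.2)
  exact ⟨c, Ioo_subset_Icc_self hc, by simp [hslope, hf.map_zero, hf.map_one]⟩

lemma derivI_le_exp (hf : IsDk 2 f) (ha : ∀ x ∈ I, |nonlin f x| ≤ a) (hx : x ∈ I) :
    derivI f x ≤ Real.exp a := by
  obtain ⟨c, hc, hc1⟩ := hf.exists_derivI_eq_one two_ne_zero
  have hlog : ∀ y ∈ I, HasDerivWithinAt (fun y => Real.log (derivI f y)) (nonlin f y) I y := by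
    intro y hy
    have hpos := (hf.derivI_pos hy).ne'
    simpa only [mul_div_cancel_right₀ _ hpos] using (hf.hasDerivWithinAt_derivI hy).log hpos
  have hle := abs_sub_le_of_hasDerivWithinAt hlog ha hx hc
  rw [hc1, Real.log_one, sub_zero] at hle
  exact (Real.log_le_iff_le_exp (hf.derivI_pos hx)).1 ((le_abs_self _).trans hle)

section Composition

protected lemma id : IsDk k id := by
  have hderiv : ∀ x ∈ I, derivI _root_.id x = 1 := fun x hx =>
    derivI_eq (hasDerivWithinAt_id x I) hx
  exact ⟨contDiffOn_id, rfl, rfl, strictMono_id.strictMonoOn _, mapsTo_id _,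
    fun x hx => by rw [hderiv x hx]; exact one_pos⟩

lemma hasDerivWithinAt_comp (hg : IsDk k g) (hf : IsDk k f) (hk : k ≠ 0) (hx : x ∈ I) :
    HasDerivWithinAt (g ∘ f) (derivI g (f x) * derivI f x) I x :=
  (hg.hasDerivWithinAt hk (hf.mapsTo hx)).comp x (hf.hasDerivWithinAt hk hx) hf.mapsTo

lemma derivI_comp (hg : IsDk k g) (hf : IsDk k f) (hk : k ≠ 0) (hx : x ∈ I) :
    derivI (g ∘ f) x = derivI g (f x) * derivI f x :=
  derivI_eq (hg.hasDerivWithinAt_comp hf hk hx) hx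

protected lemma comp (hg : IsDk k g) (hf : IsDk k f) (hk : k ≠ 0) : IsDk k (g ∘ f) := by
  refine ⟨hg.contDiffOn.comp hf.contDiffOn hf.mapsTo, ?_, ?_,
    hg.strictMonoOn.comp hf.strictMonoOn hf.mapsTo, hg.mapsTo.comp hf.mapsTo, fun x hx => ?_⟩
  · rw [Function.comp_apply, hf.map_zero, hg.map_zero]
  · rw [Function.comp_apply, hf.map_one, hg.map_one]
  · rw [hg.derivI_comp hf hk hx]
    exact mul_pos (hg.derivI_pos (hf.mapsTo hx)) (hf.derivI_pos hx)

lemma nonlin_comp (hg : IsDk 2 g) (hf : IsDk 2 f) (hx : x ∈ I) :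
    nonlin (g ∘ f) x = nonlin g (f x) * derivI f x + nonlin f x := by
  have hsecond := ((hg.hasDerivWithinAt_derivI (hf.mapsTo hx)).comp x
    (hf.hasDerivWithinAt two_ne_zero hx) hf.mapsTo).mul (hf.hasDerivWithinAt_derivI hx)
  have hgpos := (hg.derivI_pos (hf.mapsTo hx)).ne'
  have hfpos := (hf.derivI_pos hx).ne'
  rw [nonlin_eq_div (fun y hy => hg.hasDerivWithinAt_comp hf two_ne_zero hy) hsecond hx]
  simp only [Function.comp_apply]
  field_simp

end Composition

section NlNorm1

lemma abs_nonlin_le_nlNorm1 (hf : IsDk 2 f) (hx : x ∈ I) : |nonlin f x| ≤ nlNorm1 f :=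
  (abs_le_iSup_abs_of_isCompact isCompact_Icc hf.contDiffOn_nonlin.continuousOn hx).trans
    (le_max_left _ _)

lemma abs_derivI_nonlin_le_nlNorm1 (hf : IsDk 3 f) (hx : x ∈ I) :
    |derivI (nonlin f) x| ≤ nlNorm1 f := by
  have hcont : ContinuousOn (derivI (nonlin f)) I :=
    (contDiffOn_nonlin (k := 1) hf).continuousOn_derivWithin uniqueDiffOn_Icc_zero_one (by simp)
  exact (abs_le_iSup_abs_of_isCompact isCompact_Icc hcont hx).trans (le_max_right _ _)

lemma abs_nonlin_sub_le_nlNorm1 (hf : IsDk 3 f) (hx : x ∈ I) (hy : y ∈ I) :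
    |nonlin f x - nonlin f y| ≤ nlNorm1 f * |x - y| :=
  (convex_Icc 0 1).norm_image_sub_le_of_norm_hasDerivWithin_le
    (fun z hz => ((contDiffOn_nonlin (k := 1) hf).differentiableOn (by simp) z hz).hasDerivWithinAt)
    (fun _ hz => hf.abs_derivI_nonlin_le_nlNorm1 hz) hy hx

end NlNorm1

end IsDk

lemma nonlin_id {x : ℝ} (hx : x ∈ I) : nonlin id x = 0 := by
  simp [nonlin_eq_div (fun y _ => hasDerivWithinAt_id y I) (hasDerivWithinAt_const x I (1 : ℝ)) hx]

/-- The a priori bounds satisfied by a composition of maps whose `C¹`-nonlinearity norms add up to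
`S`. The powers of `exp S` are chosen so that the bounds for `S` and `R` imply those for `S + R`
on the composition. -/
structure NonlinControlled (S : ℝ) (f : ℝ → ℝ) : Prop where
  isDk : IsDk 2 f
  derivI_le : ∀ x ∈ I, derivI f x ≤ Real.exp S
  abs_nonlin_le : ∀ x ∈ I, |nonlin f x| ≤ S * Real.exp S
  abs_nonlin_sub_le : ∀ x ∈ I, ∀ y ∈ I,
    |nonlin f x - nonlin f y| ≤ S * Real.exp S ^ 3 * |x - y|

namespace NonlinControlled

variable {R S a x y : ℝ} {f g h : ℝ → ℝ}

lemma nonneg (hf : NonlinControlled S f) : 0 ≤ S :=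
  nonneg_of_mul_nonneg_left ((abs_nonneg _).trans (hf.abs_nonlin_le 0 unitInterval.zero_mem))
    (Real.exp_pos S)

lemma one_le_exp (hf : NonlinControlled S f) : 1 ≤ Real.exp S := Real.one_le_exp hf.nonneg

lemma of_abs_nonlin_le (hf : IsDk 2 f) (hle : ∀ x ∈ I, |nonlin f x| ≤ a)
    (hlip : ∀ x ∈ I, ∀ y ∈ I, |nonlin f x - nonlin f y| ≤ a * |x - y|) :
    NonlinControlled a f := by
  have ha : 0 ≤ a := (abs_nonneg _).trans (hle 0 unitInterval.zero_mem)
  have hexp : 1 ≤ Real.exp a := Real.one_le_exp ha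
  refine ⟨hf, fun x hx => hf.derivI_le_exp hle hx, fun x hx => ?_, fun x hx y hy => ?_⟩
  · exact (hle x hx).trans (le_mul_of_one_le_right ha hexp)
  · exact (hlip x hx y hy).trans <| mul_le_mul_of_nonneg_right
      (le_mul_of_one_le_right ha (one_le_pow₀ hexp)) (abs_nonneg _)

protected lemma id : NonlinControlled 0 id :=
  of_abs_nonlin_le IsDk.id (fun x hx => by simp [nonlin_id hx])
    fun x hx y hy => by simp [nonlin_id hx, nonlin_id hy]

lemma abs_derivI_le (hf : NonlinControlled S f) (hx : x ∈ I) : |derivI f x| ≤ Real.exp S :=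
  (abs_of_pos (hf.isDk.derivI_pos hx)).trans_le (hf.derivI_le x hx)

lemma abs_sub_le (hf : NonlinControlled S f) (hx : x ∈ I) (hy : y ∈ I) :
    |f x - f y| ≤ Real.exp S * |x - y| :=
  (convex_Icc 0 1).norm_image_sub_le_of_norm_hasDerivWithin_le
    (fun _ hz => hf.isDk.hasDerivWithinAt two_ne_zero hz)
    (fun _ hz => hf.abs_derivI_le hz) hy hx

lemma abs_nonlin_mul_derivI_le (hf : NonlinControlled S f) (hx : x ∈ I) :
    |nonlin f x * derivI f x| ≤ S * Real.exp S ^ 2 := by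
  rw [abs_mul, pow_two, ← mul_assoc]
  exact mul_le_mul (hf.abs_nonlin_le x hx) (hf.abs_derivI_le hx) (abs_nonneg _)
    (mul_nonneg hf.nonneg (Real.exp_pos S).le)

lemma abs_derivI_sub_le (hf : NonlinControlled S f) (hx : x ∈ I) (hy : y ∈ I) :
    |derivI f x - derivI f y| ≤ S * Real.exp S ^ 2 * |x - y| :=
  (convex_Icc 0 1).norm_image_sub_le_of_norm_hasDerivWithin_le
    (fun _ hz => hf.isDk.hasDerivWithinAt_derivI hz)
    (fun _ hz => hf.abs_nonlin_mul_derivI_le hz) hy hx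

lemma abs_derivI_sub_one_le (hf : NonlinControlled S f) (hx : x ∈ I) :
    |derivI f x - 1| ≤ S * Real.exp S ^ 2 := by
  obtain ⟨c, hc, hc1⟩ := hf.isDk.exists_derivI_eq_one two_ne_zero
  rw [← hc1]
  exact abs_sub_le_of_hasDerivWithinAt (fun _ hz => hf.isDk.hasDerivWithinAt_derivI hz)
    (fun _ hz => hf.abs_nonlin_mul_derivI_le hz) hx hc

lemma abs_sub_self_le (hf : NonlinControlled S f) (hx : x ∈ I) :
    |f x - x| ≤ S * Real.exp S ^ 2 := by
  have hle := abs_sub_le_of_hasDerivWithinAt (f := fun x => f x - x)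
    (fun z hz => (hf.isDk.hasDerivWithinAt two_ne_zero hz).sub (hasDerivWithinAt_id z I))
    (fun z hz => hf.abs_derivI_sub_one_le hz) hx unitInterval.zero_mem
  simpa only [hf.isDk.map_zero, sub_zero] using hle

lemma derivI_comp_le (hg : NonlinControlled R g) (hf : NonlinControlled S f) (hx : x ∈ I) :
    derivI (g ∘ f) x ≤ Real.exp (R + S) := by
  rw [hg.isDk.derivI_comp hf.isDk two_ne_zero hx, Real.exp_add]
  exact mul_le_mul (hg.derivI_le _ (hf.isDk.mapsTo hx)) (hf.derivI_le x hx)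
    (hf.isDk.derivI_pos hx).le (Real.exp_pos R).le

lemma abs_nonlin_comp_le (hg : NonlinControlled R g) (hf : NonlinControlled S f) (hx : x ∈ I) :
    |nonlin (g ∘ f) x| ≤ (R + S) * Real.exp (R + S) := by
  have hR := hg.nonneg
  have hS := hf.nonneg
  rw [hg.isDk.nonlin_comp hf.isDk hx, Real.exp_add]
  calc |nonlin g (f x) * derivI f x + nonlin f x|
      ≤ |nonlin g (f x)| * |derivI f x| + |nonlin f x| :=
        (abs_add_le _ _).trans_eq (by rw [abs_mul])
    _ ≤ R * Real.exp R * Real.exp S + S * Real.exp S := by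
        gcongr
        exacts [hg.abs_nonlin_le _ (hf.isDk.mapsTo hx), hf.abs_derivI_le hx,
          hf.abs_nonlin_le x hx]
    _ ≤ R * Real.exp R * Real.exp S + S * (Real.exp R * Real.exp S) := by
        gcongr
        exact le_mul_of_one_le_left (Real.exp_pos S).le hg.one_le_exp
    _ = (R + S) * (Real.exp R * Real.exp S) := by ring

lemma abs_nonlin_comp_sub_nonlin_comp_le (hg : NonlinControlled R g)
    (hf : NonlinControlled S f) (hx : x ∈ I) (hy : y ∈ I) :
    |nonlin (g ∘ f) x - nonlin (g ∘ f) y| ≤ (R + S) * Real.exp (R + S) ^ 3 * |x - y| := by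
  have hR := hg.nonneg
  have hS := hf.nonneg
  have hfx := hf.isDk.mapsTo hx
  have hfy := hf.isDk.mapsTo hy
  have hR1 := hg.one_le_exp
  rw [hg.isDk.nonlin_comp hf.isDk hx, hg.isDk.nonlin_comp hf.isDk hy, Real.exp_add]
  calc |nonlin g (f x) * derivI f x + nonlin f x - (nonlin g (f y) * derivI f y + nonlin f y)|
      = |(nonlin g (f x) - nonlin g (f y)) * derivI f x
          + nonlin g (f y) * (derivI f x - derivI f y) + (nonlin f x - nonlin f y)| := by
        congr 1; ring
    _ ≤ |nonlin g (f x) - nonlin g (f y)| * |derivI f x|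
          + |nonlin g (f y)| * |derivI f x - derivI f y| + |nonlin f x - nonlin f y| :=
        (abs_add_three _ _ _).trans_eq (by rw [abs_mul, abs_mul])
    _ ≤ R * Real.exp R ^ 3 * (Real.exp S * |x - y|) * Real.exp S
          + R * Real.exp R * (S * Real.exp S ^ 2 * |x - y|) + S * Real.exp S ^ 3 * |x - y| := by
        gcongr
        exacts [(hg.abs_nonlin_sub_le _ hfx _ hfy).trans (by gcongr; exact hf.abs_sub_le hx hy),
          hf.abs_derivI_le hx, hg.abs_nonlin_le _ hfy, hf.abs_derivI_sub_le hx hy,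
          hf.abs_nonlin_sub_le x hx y hy]
    _ = (R * Real.exp R ^ 3 * 1 + R * Real.exp R * S) * Real.exp S ^ 2 * |x - y|
          + S * (1 * Real.exp S ^ 3) * |x - y| := by ring
    _ ≤ (R * Real.exp R ^ 3 * 1 + R * Real.exp R ^ 3 * S) * Real.exp S ^ 2 * |x - y|
          + S * (Real.exp R ^ 3 * Real.exp S ^ 3) * |x - y| := by
        gcongr
        exacts [le_self_pow₀ hR1 three_ne_zero, one_le_pow₀ hR1]
    _ = R * Real.exp R ^ 3 * (S + 1) * Real.exp S ^ 2 * |x - y|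
          + S * (Real.exp R ^ 3 * Real.exp S ^ 3) * |x - y| := by ring
    _ ≤ R * Real.exp R ^ 3 * Real.exp S * Real.exp S ^ 2 * |x - y|
          + S * (Real.exp R ^ 3 * Real.exp S ^ 3) * |x - y| := by
        gcongr
        exact Real.add_one_le_exp S
    _ = (R + S) * (Real.exp R * Real.exp S) ^ 3 * |x - y| := by ring

protected lemma comp (hg : NonlinControlled R g) (hf : NonlinControlled S f) :
    NonlinControlled (R + S) (g ∘ f) :=
  ⟨hg.isDk.comp hf.isDk two_ne_zero, fun _ hx => hg.derivI_comp_le hf hx,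
    fun _ hx => hg.abs_nonlin_comp_le hf hx,
    fun _ hx _ hy => hg.abs_nonlin_comp_sub_nonlin_comp_le hf hx hy⟩

lemma abs_nonlin_comp_sub_nonlin_le (hh : NonlinControlled R h) (hf : NonlinControlled a f)
    (hx : x ∈ I) : |nonlin (h ∘ f) x - nonlin h x| ≤ a * Real.exp (R + a) ^ 5 := by
  have hR := hh.nonneg
  have ha := hf.nonneg
  have hfx := hf.isDk.mapsTo hx
  have hR1 := hh.one_le_exp
  have ha1 := hf.one_le_exp
  have hR2 : 2 * R + 1 ≤ Real.exp R ^ 2 := by nlinarith [Real.add_one_le_exp R]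
  rw [hh.isDk.nonlin_comp hf.isDk hx, Real.exp_add, mul_pow]
  calc |nonlin h (f x) * derivI f x + nonlin f x - nonlin h x|
      = |nonlin h (f x) * (derivI f x - 1) + (nonlin h (f x) - nonlin h x) + nonlin f x| := by
        congr 1; ring
    _ ≤ |nonlin h (f x)| * |derivI f x - 1| + |nonlin h (f x) - nonlin h x| + |nonlin f x| :=
        (abs_add_three _ _ _).trans_eq (by rw [abs_mul])
    _ ≤ R * Real.exp R * (a * Real.exp a ^ 2) + R * Real.exp R ^ 3 * (a * Real.exp a ^ 2)
          + a * Real.exp a := by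
        gcongr
        exacts [hh.abs_nonlin_le _ hfx, hf.abs_derivI_sub_one_le hx,
          (hh.abs_nonlin_sub_le _ hfx _ hx).trans (by gcongr; exact hf.abs_sub_self_le hx),
          hf.abs_nonlin_le x hx]
    _ ≤ R * Real.exp R ^ 3 * (a * Real.exp a ^ 2) + R * Real.exp R ^ 3 * (a * Real.exp a ^ 2)
          + Real.exp R ^ 3 * (a * Real.exp a ^ 2) := by
        gcongr ?_ + _ + ?_
        · gcongr
          exact le_self_pow₀ hR1 three_ne_zero
        · exact (mul_le_mul_of_nonneg_left (le_self_pow₀ ha1 two_ne_zero) ha).trans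
            (le_mul_of_one_le_left (by positivity) (one_le_pow₀ hR1))
    _ = a * ((2 * R + 1) * Real.exp R ^ 3 * Real.exp a ^ 2) := by ring
    _ ≤ a * (Real.exp R ^ 2 * Real.exp R ^ 3 * Real.exp a ^ 5) := by
        gcongr
        norm_num
    _ = a * (Real.exp R ^ 5 * Real.exp a ^ 5) := by ring

lemma abs_nonlin_comp_comp_sub_nonlin_comp_le (hh : NonlinControlled R h)
    (hf : NonlinControlled a f) (hg : NonlinControlled S g) (hx : x ∈ I) :
    |nonlin (h ∘ f ∘ g) x - nonlin (h ∘ g) x| ≤ a * Real.exp (R + a + S) ^ 5 := by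
  have ha := hf.nonneg
  rw [← Function.comp_assoc, (hh.comp hf).isDk.nonlin_comp hg.isDk hx,
    hh.isDk.nonlin_comp hg.isDk hx, Real.exp_add (R + a), mul_pow]
  calc |nonlin (h ∘ f) (g x) * derivI g x + nonlin g x - (nonlin h (g x) * derivI g x + nonlin g x)|
      = |nonlin (h ∘ f) (g x) - nonlin h (g x)| * |derivI g x| := by
        rw [← abs_mul]; congr 1; ring
    _ ≤ a * Real.exp (R + a) ^ 5 * Real.exp S ^ 5 := by
        gcongr
        exacts [hh.abs_nonlin_comp_sub_nonlin_le hf (hg.isDk.mapsTo hx),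
          (hg.abs_derivI_le hx).trans (le_self_pow₀ hg.one_le_exp (by norm_num))]
    _ = a * (Real.exp (R + a) ^ 5 * Real.exp S ^ 5) := by ring

end NonlinControlled

section OrderedComposition

variable {T : Type*} {φ : T → ℝ → ℝ} {c : T → ℝ}

/-- The composition of the maps `φ τ`, `τ ∈ l`, with the head of the list applied first; `ordComp`
is the case of a sorted list. -/
def listComp (φ : T → ℝ → ℝ) (l : List T) : ℝ → ℝ := l.foldl (fun g τ => φ τ ∘ g) id

lemma foldl_comp_eq_listComp_comp (φ : T → ℝ → ℝ) (l : List T) (f : ℝ → ℝ) :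
    l.foldl (fun g τ => φ τ ∘ g) f = listComp φ l ∘ f := by
  induction l generalizing f with
  | nil => rfl
  | cons τ l ih => rw [listComp, List.foldl_cons, List.foldl_cons, ih, ih (φ τ ∘ id)]; rfl

lemma listComp_append (φ : T → ℝ → ℝ) (l₁ l₂ : List T) :
    listComp φ (l₁ ++ l₂) = listComp φ l₂ ∘ listComp φ l₁ := by
  rw [listComp, List.foldl_append, foldl_comp_eq_listComp_comp φ l₂, ← listComp]

lemma listComp_cons (φ : T → ℝ → ℝ) (τ : T) (l : List T) :
    listComp φ (τ :: l) = listComp φ l ∘ φ τ :=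
  foldl_comp_eq_listComp_comp φ l (φ τ)

lemma NonlinControlled.listComp (hφ : ∀ τ, NonlinControlled (c τ) (φ τ)) (l : List T) :
    NonlinControlled (l.map c).sum (listComp φ l) := by
  induction l with
  | nil => exact NonlinControlled.id
  | cons τ l ih =>
    rw [listComp_cons, List.map_cons, List.sum_cons, add_comm]
    exact ih.comp (hφ τ)

variable [LinearOrder T]

lemma ordComp_eq_listComp (φ : T → ℝ → ℝ) (s : Finset T) : ordComp φ s = listComp φ s.sort := rfl

lemma sum_map_sort {M : Type*} [AddCommMonoid M] (s : Finset T) (c : T → M) :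
    (s.sort.map c).sum = ∑ τ ∈ s, c τ := by
  rw [← List.sum_toFinset c (s.sort_nodup _), Finset.sort_toFinset]

lemma sort_insert_eq_orderedInsert [DecidableEq T] {s : Finset T} {a : T} (ha : a ∉ s) :
    (insert a s).sort = s.sort.orderedInsert (· ≤ ·) a := by
  refine List.Perm.eq_of_pairwise' ((insert a s).pairwise_sort _)
    ((s.pairwise_sort _).orderedInsert a _) ?_
  refine ((List.perm_ext_iff_of_nodup (Finset.sort_nodup _ _)
    (List.nodup_cons.2 ⟨by simpa using ha, s.sort_nodup _⟩)).2 fun b => ?_).trans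
    (List.perm_orderedInsert _ a _).symm
  simp

lemma exists_sort_eq_append [DecidableEq T] {s : Finset T} {a : T} (ha : a ∉ s) :
    ∃ l₁ l₂ : List T, s.sort = l₁ ++ l₂ ∧ (insert a s).sort = l₁ ++ a :: l₂ :=
  ⟨_, _, List.takeWhile_append_dropWhile.symm,
    (sort_insert_eq_orderedInsert ha).trans (List.orderedInsert_eq_take_drop _ a _)⟩

lemma NonlinControlled.ordComp (hφ : ∀ τ, NonlinControlled (c τ) (φ τ)) (s : Finset T) :
    NonlinControlled (∑ τ ∈ s, c τ) (ordComp φ s) :=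
  sum_map_sort s c ▸ NonlinControlled.listComp hφ s.sort

lemma abs_nonlin_ordComp_insert_sub_le [DecidableEq T]
    (hφ : ∀ τ, NonlinControlled (c τ) (φ τ)) {s : Finset T} {a : T} (ha : a ∉ s) {x : ℝ}
    (hx : x ∈ I) :
    |nonlin (ordComp φ (insert a s)) x - nonlin (ordComp φ s) x|
      ≤ c a * Real.exp (∑ τ ∈ insert a s, c τ) ^ 5 := by
  obtain ⟨l₁, l₂, hs, has⟩ := exists_sort_eq_append ha
  have hsum : ∑ τ ∈ insert a s, c τ = (l₂.map c).sum + c a + (l₁.map c).sum := by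
    rw [← sum_map_sort, has, List.map_append, List.map_cons, List.sum_append, List.sum_cons]
    ring
  rw [hsum, ordComp_eq_listComp, ordComp_eq_listComp, hs, has, listComp_append, listComp_append,
    listComp_cons, Function.comp_assoc]
  exact (NonlinControlled.listComp hφ l₂).abs_nonlin_comp_comp_sub_nonlin_comp_le (hφ a)
    (NonlinControlled.listComp hφ l₁) hx

end OrderedComposition

section InverseNonlinearity

variable {η : ℝ → ℝ}

/-- The diffeomorphism of `[0,1]` with nonlinearity `η`, obtained by solving `(log φ')' = η` and
normalising `φ 1 = 1`: this inverts `nonlin` on continuous functions. -/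
def ofNonlin (η : ℝ → ℝ) (x : ℝ) : ℝ :=
  (∫ t in (0 : ℝ)..x, Real.exp (∫ s in (0 : ℝ)..t, η s)) /
    ∫ t in (0 : ℝ)..1, Real.exp (∫ s in (0 : ℝ)..t, η s)

lemma hasDerivAt_exp_integral (hη : Continuous η) (x : ℝ) :
    HasDerivAt (fun x => Real.exp (∫ s in (0 : ℝ)..x, η s))
      (Real.exp (∫ s in (0 : ℝ)..x, η s) * η x) x :=
  (hη.integral_hasStrictDerivAt 0 x).hasDerivAt.exp

lemma continuous_exp_integral (hη : Continuous η) :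
    Continuous fun x => Real.exp (∫ s in (0 : ℝ)..x, η s) :=
  continuous_iff_continuousAt.2 fun x => (hasDerivAt_exp_integral hη x).continuousAt

lemma integral_exp_integral_pos (hη : Continuous η) :
    0 < ∫ t in (0 : ℝ)..1, Real.exp (∫ s in (0 : ℝ)..t, η s) :=
  intervalIntegral.intervalIntegral_pos_of_pos
    ((continuous_exp_integral hη).intervalIntegrable 0 1) (fun _ => Real.exp_pos _) zero_lt_one

lemma hasDerivAt_ofNonlin (hη : Continuous η) (x : ℝ) :
    HasDerivAt (ofNonlin η) (Real.exp (∫ s in (0 : ℝ)..x, η s) /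
      ∫ t in (0 : ℝ)..1, Real.exp (∫ s in (0 : ℝ)..t, η s)) x :=
  ((continuous_exp_integral hη).integral_hasStrictDerivAt 0 x).hasDerivAt.div_const _

lemma contDiff_two_ofNonlin (hη : Continuous η) : ContDiff ℝ 2 (ofNonlin η) := by
  have hexp : ContDiff ℝ 1 fun x => Real.exp (∫ s in (0 : ℝ)..x, η s) := by
    refine contDiff_one_iff_deriv.2
      ⟨fun x => (hasDerivAt_exp_integral hη x).differentiableAt, ?_⟩
    rw [deriv_eq (hasDerivAt_exp_integral hη)]
    exact (continuous_exp_integral hη).mul hη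
  rw [← one_add_one_eq_two]
  refine contDiff_succ_iff_deriv.2
    ⟨fun x => (hasDerivAt_ofNonlin hη x).differentiableAt, by simp, ?_⟩
  rw [deriv_eq (hasDerivAt_ofNonlin hη)]
  exact hexp.div_const _

lemma isDk_two_ofNonlin (hη : Continuous η) : IsDk 2 (ofNonlin η) := by
  have hpos (x : ℝ) : 0 < Real.exp (∫ s in (0 : ℝ)..x, η s) /
      ∫ t in (0 : ℝ)..1, Real.exp (∫ s in (0 : ℝ)..t, η s) :=
    div_pos (Real.exp_pos _) (integral_exp_integral_pos hη)
  have hmono : StrictMono (ofNonlin η) := strictMono_of_hasDerivAt_pos (hasDerivAt_ofNonlin hη) hpos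
  have h0 : ofNonlin η 0 = 0 := by simp [ofNonlin]
  have h1 : ofNonlin η 1 = 1 := div_self (integral_exp_integral_pos hη).ne'
  refine ⟨(contDiff_two_ofNonlin hη).contDiffOn, h0, h1, hmono.strictMonoOn _, fun x hx => ?_,
    fun x hx => ?_⟩
  · exact ⟨h0 ▸ hmono.monotone hx.1, h1 ▸ hmono.monotone hx.2⟩
  · rw [derivI_eq (hasDerivAt_ofNonlin hη x).hasDerivWithinAt hx]
    exact hpos x

lemma nonlin_ofNonlin (hη : Continuous η) {x : ℝ} (hx : x ∈ I) : nonlin (ofNonlin η) x = η x := by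
  rw [nonlin_eq_div (fun y _ => (hasDerivAt_ofNonlin hη y).hasDerivWithinAt)
    ((hasDerivAt_exp_integral hη x).div_const _).hasDerivWithinAt hx,
    div_div_div_cancel_right₀ (integral_exp_integral_pos hη).ne',
    mul_div_cancel_left₀ _ (Real.exp_pos _).ne']

lemma exists_isDk_two_eqOn_nonlin (hη : ContinuousOn η I) :
    ∃ Φ : ℝ → ℝ, IsDk 2 Φ ∧ EqOn (nonlin Φ) η I := by
  have hext : Continuous (IccExtend zero_le_one (domRestrict I η)) :=
    (continuousOn_iff_continuous_domRestrict.1 hη).Icc_extend'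
  exact ⟨_, isDk_two_ofNonlin hext, fun x hx =>
    (nonlin_ofNonlin hext hx).trans (IccExtend_of_mem _ _ hx)⟩

end InverseNonlinearity

end UnitInterval

section Convergence

variable {T : Type*} [LinearOrder T] {φ : T → ℝ → ℝ} {c : T → ℝ}

lemma uniformCauchySeqOn_nonlin_ordComp (hφ : ∀ τ, NonlinControlled (c τ) (φ τ))
    (hc : Summable c) :
    UniformCauchySeqOn (fun s => nonlin (ordComp φ s)) atTop (Icc 0 1) := by
  have hc0 : ∀ τ, 0 ≤ c τ := fun τ => (hφ τ).nonneg
  refine uniformCauchySeqOn_of_dist_insert_le (hc.mul_right (Real.exp (∑' τ, c τ) ^ 5))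
    fun x hx s a ha => (abs_nonlin_ordComp_insert_sub_le hφ ha hx).trans ?_
  gcongr
  exacts [hc0 a, hc.sum_le_tsum _ fun τ _ => hc0 τ]

theorem countable_composition_general (hD : ∀ τ, IsDk 2 (φ τ))
    (hle : ∀ τ, ∀ x ∈ Icc (0 : ℝ) 1, |nonlin (φ τ) x| ≤ c τ)
    (hlip : ∀ τ, ∀ x ∈ Icc (0 : ℝ) 1, ∀ y ∈ Icc (0 : ℝ) 1,
      |nonlin (φ τ) x - nonlin (φ τ) y| ≤ c τ * |x - y|)
    (hc : Summable c) :
    ∃ Φ : ℝ → ℝ, IsDk 2 Φ ∧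
      TendstoUniformlyOn (fun s => nonlin (ordComp φ s)) (nonlin Φ) atTop (Icc 0 1) := by
  have hφ (τ) : NonlinControlled (c τ) (φ τ) := .of_abs_nonlin_le (hD τ) (hle τ) (hlip τ)
  obtain ⟨η, hη⟩ := exists_tendstoUniformlyOn (uniformCauchySeqOn_nonlin_ordComp hφ hc)
  have hcont : ContinuousOn η (Icc 0 1) := hη.continuousOn <| .of_forall fun s =>
    (NonlinControlled.ordComp hφ s).isDk.contDiffOn_nonlin.continuousOn
  obtain ⟨Φ, hΦ, hΦη⟩ := exists_isDk_two_eqOn_nonlin hcont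
  exact ⟨Φ, hΦ, hη.congr_right hΦη.symm⟩

end Convergence

/-- a decomposition over a countable linearly ordered time set `T` with
summable `C¹`-nonlinearity norms can be composed: for any enumeration `θ` of `T`, the
ordered compositions `ψ_n` of the first `n` maps form a Cauchy sequence in the
nonlinearity sup-metric, and they converge to an element of `D²([0,1])` which does
not depend on the enumeration. -/
theorem countable_composition (T : Type*) [LinearOrder T] [Countable T]
    [DecidableEq T]
    (φ : T → ℝ → ℝ) (hD : ∀ τ, IsDk 3 (φ τ))
    (hs : Summable fun τ => nlNorm1 (φ τ)) :
    ∃ Φ : ℝ → ℝ, IsDk 2 Φ ∧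
      ∀ θ : ℕ → T, Function.Bijective θ →
        (∀ ε : ℝ, 0 < ε → ∃ N : ℕ, ∀ m ≥ N, ∀ n ≥ N,
          (⨆ x : Icc (0 : ℝ) 1,
            |nonlin (ordComp φ (Finset.image θ (Finset.range m))) x.1 -
              nonlin (ordComp φ (Finset.image θ (Finset.range n))) x.1|) ≤ ε) ∧
        Tendsto (fun n => ⨆ x : Icc (0 : ℝ) 1,
            |nonlin (ordComp φ (Finset.image θ (Finset.range n))) x.1 - nonlin Φ x.1|)
          atTop (𝓝 0) := by
  obtain ⟨Φ, hΦ, hlim⟩ := countable_composition_general (fun τ => (hD τ).of_le (Nat.le_succ 2))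
    (fun τ _ hx => ((hD τ).of_le (Nat.le_succ 2)).abs_nonlin_le_nlNorm1 hx)
    (fun τ _ hx _ hy => (hD τ).abs_nonlin_sub_le_nlNorm1 hx hy) hs
  refine ⟨Φ, hΦ, fun θ hθ => ?_⟩
  have hseq := tendstoUniformlyOn_image_range hlim hθ.surjective
  exact ⟨fun _ hε => exists_forall_iSup_abs_sub_le hseq.uniformCauchySeqOn hε,
    tendsto_iSup_abs_sub hseq⟩

end
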